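/- Let 1 ≤ p < 2 and let {X_{m,n} : m ≥ 1, n ≥ 1} be a double array of random variables satisfying Condition (H_2). If the family { |X_{m,n}|^p : m ≥ 1, n ≥ 1 } is uniformly integrable, then max_{u≤m, v≤n} |∑_{i=1}^{u} ∑_{j=1}^{v} (X_{i,j} − E X_{i,j})| / (mn)^{1/p} → 0 in probability as max(m, n) → ∞. -/

import Mathlib

/-!
By splitting into positive and negative parts, which are monotone functions of the variables, one
may assume that the array is nonnegative. Put `b = (mn)^{1/p}` and cut each variable at the levels
`b_d = b 2^{-d/p}`, `d = 0, 1, …, D`. Then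

* the excess over `b_0 = b` has total mean at most `mn b^{1-p} κ(b) = b κ(b)`, where
  `κ(t) = sup E |X|^p 1(|X| > t)`;
* the part below `b_D` is at most `mn b_D`, negligible compared to `b` for `D` large;
* the slice `Y` between `b_{d+1}` and `b_d` is a nonnegative nondecreasing function of the
  variable, with `E Y ≤ b_{d+1}^{1-p} κ(b_{d+1})` and `E Y² ≤ b_d^{2-p} κ(b_{d+1})`.

Partial sums of a slice are monotone in the corner of the rectangle, so only corners on a
`2^d × 2^d` grid matter, up to the mean of `O(mn 2^{-d})` cells, which is
`O(b 2^{-d/p} κ(b_{d+1}))` (`dom_of_variance`). On the grid, Condition `(H_2)` together with a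
two-parameter Rademacher–Menshov inequality (`chaining`, `grid_max`) bounds the expected maximum
by `(d+1)² (C mn E Y²)^{1/2} = O(b (d+1)² 2^{-d(1/p-1/2)} κ(b_{d+1})^{1/2})`. Matching the grid to
the level in this way is what avoids a loss of logarithms of `m` and `n`: both bounds are
geometrically small in `d` because `p < 2`, so the series of slice contributions, divided by `b`,
tends to `0` as `b → ∞` by dominated convergence (`scaleTerm_tsum`). Markov's inequality finishes
the proof.
-/


open MeasureTheory ProbabilityTheory Finset Filter
open scoped NNReal ENNReal

noncomputable section

/-- `rlog x` is the natural logarithm of `max x 2`. -/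
def rlog (x : ℝ) : ℝ := Real.log (max x 2)

/-- `itlog k x` is the `k`-fold iterate of `rlog` applied to `x`. -/
def itlog : ℕ → ℝ → ℝ
  | 0, x => x
  | k + 1, x => rlog (itlog k x)

/-- `logNu2 ν x = (log x)(log log x) ⋯ (log ⋯ log x)²`, the product of the first `ν`
iterated logarithms of `x`, with the last (`ν`-fold iterated) factor squared. -/
def logNu2 (ν : ℕ) (x : ℝ) : ℝ := (∏ k ∈ Finset.Icc 1 ν, itlog k x) * itlog ν x

/-- The maximum of the (nonnegative) values `g i j` over `1 ≤ i ≤ M`, `1 ≤ j ≤ N`. -/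
def maxNN (M N : ℕ) (g : ℕ → ℕ → ℝ) : ℝ :=
  (((Finset.Icc 1 M ×ˢ Finset.Icc 1 N).sup fun p => Real.toNNReal (g p.1 p.2) : ℝ≥0) : ℝ)

/-- `maxDS f m n = max_{1 ≤ u ≤ m, 1 ≤ v ≤ n} |∑_{i=1}^{u} ∑_{j=1}^{v} f i j|`. -/
def maxDS (f : ℕ → ℕ → ℝ) (m n : ℕ) : ℝ :=
  maxNN m n fun u v => |∑ i ∈ Finset.Icc 1 u, ∑ j ∈ Finset.Icc 1 v, f i j|

/-- Index set of a doubly-indexed array: pairs of indices that are both at least `1`. -/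
abbrev PIdx : Type := {k : ℕ × ℕ // 1 ≤ k.1 ∧ 1 ≤ k.2}

/-- Condition (H_{2q}) with a given constant `C`: for every finite subfamily and every
family of nondecreasing functions (whose relevant expectations are finite),
`E|∑ (f_λ(X_λ) - E f_λ(X_λ))|^{2q}
   ≤ C (|I| max E|f_λ(X_λ)|^{2q} + |I|^q max (E f_λ(X_λ)²)^q)`. -/
def CondHWith {Ω : Type*} [MeasureSpace Ω] {Λ : Type*} (q C : ℝ) (X : Λ → Ω → ℝ) : Prop :=
  ∀ (I : Finset Λ) (hI : I.Nonempty) (f : Λ → ℝ → ℝ),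
    (∀ l ∈ I, Monotone (f l)) →
    (∀ l ∈ I, Integrable fun ω => f l (X l ω)) →
    (∀ l ∈ I, Integrable fun ω => (f l (X l ω)) ^ 2) →
    (∀ l ∈ I, Integrable fun ω => |f l (X l ω)| ^ (2 * q)) →
    (Integrable fun ω => |∑ l ∈ I, (f l (X l ω) - ∫ ω', f l (X l ω'))| ^ (2 * q)) →
    ∫ ω, |∑ l ∈ I, (f l (X l ω) - ∫ ω', f l (X l ω'))| ^ (2 * q) ≤
      C * ((I.card : ℝ) * I.sup' hI (fun l => ∫ ω, |f l (X l ω)| ^ (2 * q)) +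
           (I.card : ℝ) ^ q * I.sup' hI fun l => (∫ ω, (f l (X l ω)) ^ 2) ^ q)

/-- Condition (H_{2q}): there is a finite constant for which `CondHWith` holds. -/
def CondH {Ω : Type*} [MeasureSpace Ω] {Λ : Type*} (q : ℝ) (X : Λ → Ω → ℝ) : Prop :=
  ∃ C : ℝ, CondHWith q C X

/-- The family `X` is stochastically dominated by the random variable `Y`:
`sup_λ P(|X_λ| > x) ≤ P(|Y| > x)` for every real `x`. -/
def StochDom {Ω : Type*} [MeasureSpace Ω] {Λ : Type*} (X : Λ → Ω → ℝ) (Y : Ω → ℝ) : Prop :=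
  ∀ x : ℝ, ∀ l : Λ, volume {ω | x < |X l ω|} ≤ volume {ω | x < |Y ω|}

/-- Uniform integrability: `sup_λ E(|Y_λ| 1(|Y_λ| > a)) → 0` as `a → ∞`. -/
def UnifInt {Ω : Type*} [MeasureSpace Ω] {Λ : Type*} (Y : Λ → Ω → ℝ) : Prop :=
  (∀ l, Integrable (Y l)) ∧
  ∀ ε : ℝ, 0 < ε → ∃ a : ℝ, ∀ l, ∫ ω, (if a < |Y l ω| then |Y l ω| else 0) ≤ ε

/-- A slowly varying function: positive and measurable on `[0,∞)` with
`L(cx)/L(x) → 1` as `x → ∞` for every `c > 0`. -/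
def SlowlyVarying (L : ℝ → ℝ) : Prop :=
  Measurable L ∧ (∀ x : ℝ, 0 ≤ x → 0 < L x) ∧
  ∀ c : ℝ, 0 < c → Tendsto (fun x => L (c * x) / L x) atTop (nhds 1)

/-- `Lt` is a de Bruijn conjugate of `L`. -/
def DeBruijnConjugate (L Lt : ℝ → ℝ) : Prop :=
  SlowlyVarying Lt ∧
  Tendsto (fun x => L x * Lt (x * L x)) atTop (nhds 1) ∧
  Tendsto (fun x => Lt x * L (x * Lt x)) atTop (nhds 1)

/-- Truncation from above at level `b (2^s)`:
`X_{i,j} 1(X_{i,j} ≤ b_{2^s}) + b_{2^s} 1(X_{i,j} > b_{2^s})`. -/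
def truncUp {Ω : Type*} (X : ℕ → ℕ → Ω → ℝ) (b : ℕ → ℝ) (s i j : ℕ) (ω : Ω) : ℝ :=
  if X i j ω ≤ b (2 ^ s) then X i j ω else b (2 ^ s)

/-- Two-sided truncation at level `b (2^s)`:
`-b_{2^s} 1(X < -b_{2^s}) + X 1(|X| ≤ b_{2^s}) + b_{2^s} 1(X > b_{2^s})`. -/
def truncTwo {Ω : Type*} (X : ℕ → ℕ → Ω → ℝ) (b : ℕ → ℝ) (s i j : ℕ) (ω : Ω) : ℝ :=
  if X i j ω < -b (2 ^ s) then -b (2 ^ s)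
  else if b (2 ^ s) < X i j ω then b (2 ^ s) else X i j ω

/-! ### A maximal inequality -/

/-- A Rademacher–Menshov maximal inequality by bisection: if `F s t` behaves like the norm of an
increment over `(s, t]` whose second moment is at most `W t - W s`, then a single `M` dominates
all increments starting at `s` over a stretch of length at most `2^a`, with
`E M² ≤ (a+1)² (W(s+2^a) - W s)`. Allowing a general weight `W` lets the increments be blocks
of unequal size, and allowing any subadditive `F` lets the lemma be applied once per coordinate. -/
lemma chaining {Ω : Type*} [MeasureSpace Ω]
    (F : ℕ → ℕ → Ω → ℝ) (W : ℕ → ℝ)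
    (h0 : ∀ s t ω, 0 ≤ F s t ω) (hss : ∀ s ω, F s s ω = 0)
    (hsub : ∀ s r t ω, s ≤ r → r ≤ t → F s t ω ≤ F s r ω + F r t ω)
    (hL : ∀ s t, MemLp (F s t) 2 volume)
    (hW : ∀ s t, s ≤ t → ∫ ω, F s t ω ^ 2 ≤ W t - W s) (a : ℕ) :
    ∀ s, ∃ M : Ω → ℝ, (∀ ω, 0 ≤ M ω) ∧ MemLp M 2 volume ∧
      (∀ t ≤ 2 ^ a, ∀ ω, F s (s + t) ω ≤ M ω) ∧
      ∫ ω, M ω ^ 2 ≤ ((a : ℝ) + 1) ^ 2 * (W (s + 2 ^ a) - W s) := by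
  induction a with
  | zero =>
    intro s
    refine ⟨F s (s + 1), h0 _ _, hL _ _, ?_, ?_⟩
    · intro t ht ω
      have : t = 0 ∨ t = 1 := by simp at ht; omega
      rcases this with rfl | rfl
      · simpa [hss] using h0 _ _ _
      · rfl
    · simpa using hW s (s + 1) (by omega)
  | succ a ih =>
    intro s
    obtain ⟨M₁, p₁, L₁, b₁, e₁⟩ := ih s
    obtain ⟨M₂, p₂, L₂, b₂, e₂⟩ := ih (s + 2 ^ a)
    have hpow : 2 ^ (a + 1) = 2 ^ a + 2 ^ a := by ring
    refine ⟨fun ω => F s (s + 2 ^ a) ω + max (M₁ ω) (M₂ ω), ?_, ?_, ?_, ?_⟩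
    · intro ω
      have := h0 s (s + 2 ^ a) ω
      have := (p₁ ω).trans (le_max_left (M₁ ω) (M₂ ω))
      linarith
    · exact (hL _ _).add (L₁.sup L₂)
    · intro t ht ω
      rcases le_total t (2 ^ a) with h | h
      · have := b₁ t h ω
        have := h0 s (s + 2 ^ a) ω
        have := le_max_left (M₁ ω) (M₂ ω)
        linarith
      · have h1 := hsub s (s + 2 ^ a) (s + t) ω (by omega) (by omega)
        have h2 := b₂ (t - 2 ^ a) (by omega) ω
        have h3 : s + 2 ^ a + (t - 2 ^ a) = s + t := by omega
        rw [h3] at h2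
        have := le_max_right (M₁ ω) (M₂ ω)
        linarith
    · set k : ℝ := (a : ℝ) + 1 with hk
      have hkpos : 0 < k := by positivity
      have i0 := (hL s (s + 2 ^ a)).integrable_sq
      have i1 := L₁.integrable_sq
      have i2 := L₂.integrable_sq
      have i12 : Integrable (fun ω => M₁ ω ^ 2 + M₂ ω ^ 2) volume := i1.add i2
      have hmono : W (s + 2 ^ a) ≤ W (s + 2 ^ (a + 1)) := by
        have h := hW (s + 2 ^ a) (s + 2 ^ (a + 1)) (by
          rw [hpow]
          exact Nat.add_le_add_left (Nat.le_add_right _ _) _)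
        have : 0 ≤ ∫ ω, F (s + 2 ^ a) (s + 2 ^ (a + 1)) ω ^ 2 :=
          integral_nonneg fun ω => sq_nonneg _
        linarith
      calc ∫ ω, (F s (s + 2 ^ a) ω + max (M₁ ω) (M₂ ω)) ^ 2
          ≤ ∫ ω, ((k + 1) * F s (s + 2 ^ a) ω ^ 2
              + (1 + 1 / k) * (M₁ ω ^ 2 + M₂ ω ^ 2)) := by
            apply integral_mono_of_nonneg
            · exact Eventually.of_forall fun ω => sq_nonneg _
            · exact (i0.const_mul _).add (i12.const_mul _)
            · refine Eventually.of_forall fun ω => ?_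
              have hm : max (M₁ ω) (M₂ ω) ^ 2 ≤ M₁ ω ^ 2 + M₂ ω ^ 2 := by
                rcases max_cases (M₁ ω) (M₂ ω) with h | h <;> rw [h.1] <;>
                  nlinarith [sq_nonneg (M₁ ω), sq_nonneg (M₂ ω)]
              -- the weights make the induction close: `(k+1) + (1+1/k) k² = (k+1)²`
              have hy : (F s (s + 2 ^ a) ω + max (M₁ ω) (M₂ ω)) ^ 2 ≤
                  (k + 1) * F s (s + 2 ^ a) ω ^ 2
                    + (1 + 1 / k) * max (M₁ ω) (M₂ ω) ^ 2 := by
                have : 0 ≤ (k * F s (s + 2 ^ a) ω - max (M₁ ω) (M₂ ω)) ^ 2 / k := by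
                  positivity
                have e : (k + 1) * F s (s + 2 ^ a) ω ^ 2
                    + (1 + 1 / k) * max (M₁ ω) (M₂ ω) ^ 2
                    - (F s (s + 2 ^ a) ω + max (M₁ ω) (M₂ ω)) ^ 2
                    = (k * F s (s + 2 ^ a) ω - max (M₁ ω) (M₂ ω)) ^ 2 / k := by
                  field_simp
                  ring
                linarith
              exact hy.trans (add_le_add le_rfl
                (mul_le_mul_of_nonneg_left hm (by positivity)))
        _ = (k + 1) * (∫ ω, F s (s + 2 ^ a) ω ^ 2)
              + (1 + 1 / k) * ((∫ ω, M₁ ω ^ 2) + ∫ ω, M₂ ω ^ 2) := by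
            rw [integral_add (i0.const_mul _) (i12.const_mul _),
              integral_const_mul, integral_const_mul, integral_add i1 i2]
        _ ≤ (k + 1) * (W (s + 2 ^ (a + 1)) - W s)
              + (1 + 1 / k) * (k ^ 2 * (W (s + 2 ^ a) - W s)
                + k ^ 2 * (W (s + 2 ^ a + 2 ^ a) - W (s + 2 ^ a))) := by
            have := hW s (s + 2 ^ a) (Nat.le_add_right _ _)
            gcongr
            linarith
        _ = ((((a + 1 : ℕ) : ℝ)) + 1) ^ 2 * (W (s + 2 ^ (a + 1)) - W s) := by
            have : s + 2 ^ (a + 1) = s + 2 ^ a + 2 ^ a := by omega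
            rw [this]
            push_cast
            rw [← hk]
            field_simp
            ring

/-! ### Rectangular sums and grids -/

/-- The sum of the array `c` over the rectangle `[s, t) × [s', t')`. -/
def blk (c : ℕ → ℕ → ℝ) (s t s' t' : ℕ) : ℝ :=
  ∑ i ∈ Finset.Ico s t, ∑ j ∈ Finset.Ico s' t', c i j

lemma blk_mono {c : ℕ → ℕ → ℝ} (hc : ∀ i j, 0 ≤ c i j) {u u' v v' : ℕ} (hu : u ≤ u')
    (hv : v ≤ v') : blk c 0 u 0 v ≤ blk c 0 u' 0 v' := by
  unfold blk
  calc _ ≤ ∑ i ∈ Finset.Ico 0 u, ∑ j ∈ Finset.Ico 0 v', c i j :=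
        Finset.sum_le_sum fun i _ => Finset.sum_le_sum_of_subset_of_nonneg
          (Finset.Ico_subset_Ico_right hv) fun _ _ _ => hc _ _
    _ ≤ _ := Finset.sum_le_sum_of_subset_of_nonneg
          (Finset.Ico_subset_Ico_right hu) fun _ _ _ => Finset.sum_nonneg fun _ _ => hc _ _

lemma blk_sub (c e : ℕ → ℕ → ℝ) (s t s' t' : ℕ) :
    blk (fun i j => c i j - e i j) s t s' t' = blk c s t s' t' - blk e s t s' t' := by
  simp [blk, Finset.sum_sub_distrib]

lemma blk_add (c e : ℕ → ℕ → ℝ) (s t s' t' : ℕ) :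
    blk (fun i j => c i j + e i j) s t s' t' = blk c s t s' t' + blk e s t s' t' := by
  simp [blk, Finset.sum_add_distrib]

lemma blk_const (y : ℝ) (u v : ℕ) : blk (fun _ _ => y) 0 u 0 v = u * v * y := by
  simp [blk, mul_assoc]

lemma blk_diff_le {c : ℕ → ℕ → ℝ} {y : ℝ} (hc : ∀ i j, c i j ≤ y) {u u' v v' : ℕ}
    (hu : u ≤ u') (hv : v ≤ v') :
    blk c 0 u' 0 v' - blk c 0 u 0 v ≤ ((u' : ℝ) * v' - u * v) * y := by
  have h := blk_mono (c := fun i j => y - c i j) (fun i j => sub_nonneg.2 (hc i j)) hu hv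
  rw [blk_sub, blk_sub, blk_const, blk_const] at h
  linarith

lemma blk_split_left (c : ℕ → ℕ → ℝ) {s r t : ℕ} (s' t' : ℕ) (h1 : s ≤ r) (h2 : r ≤ t) :
    blk c s t s' t' = blk c s r s' t' + blk c r t s' t' := by
  simp only [blk]
  rw [Finset.sum_Ico_consecutive _ h1 h2]

lemma blk_split_right (c : ℕ → ℕ → ℝ) (s t : ℕ) {s' r t' : ℕ} (h1 : s' ≤ r) (h2 : r ≤ t') :
    blk c s t s' t' = blk c s t s' r + blk c s t r t' := by
  simp only [blk, ← Finset.sum_add_distrib]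
  exact Finset.sum_congr rfl fun i _ => (Finset.sum_Ico_consecutive _ h1 h2).symm

lemma blk_le_blk_abs (c : ℕ → ℕ → ℝ) {u u' v v' : ℕ} (hu : u ≤ u') (hv : v ≤ v') :
    |blk c 0 u 0 v| ≤ blk (fun i j => |c i j|) 0 u' 0 v' := by
  refine le_trans ?_ (blk_mono (fun i j => abs_nonneg _) hu hv)
  refine (Finset.abs_sum_le_sum_abs _ _).trans ?_
  exact Finset.sum_le_sum fun i _ => Finset.abs_sum_le_sum_abs _ _

lemma memLp_blk {Ω : Type*} [MeasureSpace Ω] {q : ℝ≥0∞} {Y : ℕ → ℕ → Ω → ℝ}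
    (hY : ∀ i j, MemLp (Y i j) q volume) (s t s' t' : ℕ) :
    MemLp (fun ω => blk (fun i j => Y i j ω) s t s' t') q volume := by
  simp only [blk]
  exact memLp_finsetSum _ fun i _ => memLp_finsetSum _ fun j _ => hY i j

/-- The points of the grid of mesh `A` in `[0, m]`, capped at `m` so that blocks never leave the
original rectangle. -/
def grid (m A i : ℕ) : ℕ := min (i * A) m

lemma grid_mono (m A : ℕ) : Monotone (grid m A) := fun i j h => by
  unfold grid
  exact min_le_min_right _ (Nat.mul_le_mul_right _ h)

lemma grid_zero (m A : ℕ) : grid m A 0 = 0 := by simp [grid]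

lemma grid_le (m A i : ℕ) : grid m A i ≤ m := min_le_right _ _

/-- With mesh `m / 2^d + 1` the first `2^d` grid steps cover `[0, m]`, and rounding moves a point
by at most `m / 2^d`; in particular not at all once `2^d > m`. -/
lemma exists_grid_lower (m d u : ℕ) (hu : u ≤ m) : ∃ i ≤ 2 ^ d,
    grid m (m / 2 ^ d + 1) i ≤ u ∧ u ≤ grid m (m / 2 ^ d + 1) i + m / 2 ^ d := by
  set A := m / 2 ^ d + 1 with hA
  have hm : m < 2 ^ d * A := by
    have := Nat.lt_mul_div_succ m (b := 2 ^ d) (by positivity)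
    simpa [hA] using this
  have hApos : 0 < A := Nat.succ_pos _
  have h1 : u / A * A ≤ u := Nat.div_mul_le_self u A
  have h2 : u < u / A * A + A := Nat.lt_div_mul_add hApos
  refine ⟨u / A, ?_, ?_, ?_⟩
  · apply Nat.div_le_of_le_mul
    nlinarith
  · exact (min_le_left _ _).trans h1
  · unfold grid
    rw [min_eq_left (h1.trans hu)]
    omega

lemma exists_grid_upper (m d u : ℕ) (hu : u ≤ m) : ∃ i ≤ 2 ^ d,
    u ≤ grid m (m / 2 ^ d + 1) i ∧ grid m (m / 2 ^ d + 1) i ≤ u + m / 2 ^ d := by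
  set A := m / 2 ^ d + 1 with hA
  have hm : m < 2 ^ d * A := by
    have := Nat.lt_mul_div_succ m (b := 2 ^ d) (by positivity)
    simpa [hA] using this
  have hApos : 0 < A := Nat.succ_pos _
  have h1 : (u + (A - 1)) / A * A ≤ u + (A - 1) := Nat.div_mul_le_self _ A
  have h2 : u + (A - 1) < (u + (A - 1)) / A * A + A := Nat.lt_div_mul_add hApos
  refine ⟨(u + (A - 1)) / A, ?_, ?_, ?_⟩
  · rw [← Nat.lt_succ_iff, Nat.div_lt_iff_lt_mul hApos]
    have : (2 ^ d).succ * A = 2 ^ d * A + A := Nat.succ_mul _ _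
    omega
  · exact le_min (by omega) hu
  · exact (min_le_left _ _).trans (by omega)

/-- Maximal inequality over all rectangles `[0, x) × [0, y)` with corner on the grid: `chaining`
in the first coordinate for each strip, then in the second coordinate for the maximum over the
first. The logarithmic cost `(d+1)⁴` depends on the number `2^d` of grid points only. -/
lemma grid_max {Ω : Type*} [MeasureSpace Ω] {Y : ℕ → ℕ → Ω → ℝ}
    (hY : ∀ i j, MemLp (Y i j) 2 volume) {K : ℝ}
    (hV : ∀ s t s' t', s ≤ t → s' ≤ t' →
      ∫ ω, (blk (fun i j => Y i j ω) s t s' t') ^ 2 ≤ K * (((t : ℝ) - s) * ((t' : ℝ) - s')))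
    (m n A B d : ℕ) :
    ∃ M : Ω → ℝ, (∀ ω, 0 ≤ M ω) ∧ MemLp M 2 volume ∧
      (∀ i ≤ 2 ^ d, ∀ j ≤ 2 ^ d, ∀ ω,
        |blk (fun i j => Y i j ω) 0 (grid m A i) 0 (grid n B j)| ≤ M ω) ∧
      ∫ ω, M ω ^ 2 ≤ ((d : ℝ) + 1) ^ 4 * (K * (m * n)) := by
  have hK : 0 ≤ K := by
    have := hV 0 1 0 1 (by simp) (by simp)
    have h0 : 0 ≤ ∫ ω, (blk (fun i j => Y i j ω) 0 1 0 1) ^ 2 :=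
      integral_nonneg fun ω => sq_nonneg _
    simpa using h0.trans this
  have one : ∀ s' t', s' ≤ t' → ∃ M : Ω → ℝ, (∀ ω, 0 ≤ M ω) ∧ MemLp M 2 volume ∧
      (∀ i ≤ 2 ^ d, ∀ ω, |blk (fun i j => Y i j ω) 0 (grid m A i) s' t'| ≤ M ω) ∧
      ∫ ω, M ω ^ 2 ≤ ((d : ℝ) + 1) ^ 2 * (K * m * ((t' : ℝ) - s')) := by
    intro s' t' hst
    have hnn : (0 : ℝ) ≤ (t' : ℝ) - s' := sub_nonneg.2 (by exact_mod_cast hst)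
    obtain ⟨M, h1, h2, h3, h4⟩ := chaining
      (fun s t ω => |blk (fun i j => Y i j ω) (grid m A s) (grid m A t) s' t'|)
      (fun s => K * ((t' : ℝ) - s') * (grid m A s : ℝ))
      (fun _ _ _ => abs_nonneg _) (fun s ω => by simp [blk])
      (fun s r t ω hsr hrt => by
        rw [blk_split_left _ s' t' (grid_mono m A hsr) (grid_mono m A hrt)]
        exact abs_add_le _ _)
      (fun s t => (memLp_blk hY _ _ _ _).abs)
      (fun s t hs => by
        simp only [sq_abs]
        refine (hV _ _ _ _ (grid_mono m A hs) hst).trans (le_of_eq ?_)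
        ring) d 0
    refine ⟨M, h1, h2, fun i hi ω => ?_, h4.trans ?_⟩
    · simpa [grid_zero] using h3 i hi ω
    · gcongr
      have : (grid m A (0 + 2 ^ d) : ℝ) ≤ m := by exact_mod_cast grid_le _ _ _
      rw [grid_zero]
      calc _ = K * ((t' : ℝ) - s') * (grid m A (0 + 2 ^ d) : ℝ) := by simp
        _ ≤ K * ((t' : ℝ) - s') * m := by gcongr
        _ = _ := by ring
  have hne : (Finset.range (2 ^ d + 1)).Nonempty := ⟨0, by simp⟩
  let G : ℕ → ℕ → Ω → ℝ := fun s' t' ω => (Finset.range (2 ^ d + 1)).sup' hne fun i =>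
    |blk (fun i j => Y i j ω) 0 (grid m A i) (grid n B s') (grid n B t')|
  have hle : ∀ s' t' ω i, i ≤ 2 ^ d →
      |blk (fun i j => Y i j ω) 0 (grid m A i) (grid n B s') (grid n B t')| ≤ G s' t' ω :=
    fun s' t' ω i hi => Finset.le_sup' (fun i =>
      |blk (fun i j => Y i j ω) 0 (grid m A i) (grid n B s') (grid n B t')|)
      (Finset.mem_range.2 (by omega))
  have hG0 : ∀ s' t' ω, 0 ≤ G s' t' ω := fun s' t' ω =>
    (abs_nonneg _).trans (hle s' t' ω 0 (by simp))
  have hGL : ∀ s' t', MemLp (G s' t') 2 volume := by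
    intro s' t'
    have : G s' t' = (Finset.range (2 ^ d + 1)).sup' hne fun i ω =>
        |blk (fun i j => Y i j ω) 0 (grid m A i) (grid n B s') (grid n B t')| := by
      ext ω
      simp [G, Finset.sup'_apply]
    rw [this]
    refine Finset.sup'_induction hne _ (p := fun f => MemLp f 2 volume)
      (fun f hf g hg => hf.sup hg) fun i _ => (memLp_blk hY _ _ _ _).abs
  obtain ⟨M, h1, h2, h3, h4⟩ := chaining G
    (fun j => ((d : ℝ) + 1) ^ 2 * (K * m) * (grid n B j : ℝ)) hG0
    (fun s ω => by simp [G, blk])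
    (fun s r t ω hsr hrt => by
      refine Finset.sup'_le hne _ fun i hi => ?_
      have hi' : i ≤ 2 ^ d := by simp at hi; omega
      rw [blk_split_right _ _ _ (grid_mono n B hsr) (grid_mono n B hrt)]
      exact (abs_add_le _ _).trans (add_le_add (hle _ _ _ _ hi') (hle _ _ _ _ hi')))
    hGL
    (fun s t hs => by
      obtain ⟨M, h1, h2, h3, h4⟩ := one _ _ (grid_mono n B hs)
      calc ∫ ω, G s t ω ^ 2 ≤ ∫ ω, M ω ^ 2 := by
            refine integral_mono_of_nonneg (Eventually.of_forall fun ω => sq_nonneg _)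
              h2.integrable_sq (Eventually.of_forall fun ω => ?_)
            refine pow_le_pow_left₀ (hG0 _ _ _) (Finset.sup'_le hne _ fun i hi => ?_) 2
            exact h3 i (by simp at hi; omega) ω
        _ ≤ _ := h4.trans (le_of_eq (by ring))) d 0
  refine ⟨M, h1, h2, fun i hi j hj ω => ?_, h4.trans ?_⟩
  · have := h3 j hj ω
    have h' := hle 0 j ω i hi
    rw [grid_zero] at h'
    rw [zero_add] at this
    exact h'.trans this
  · have : (grid n B (0 + 2 ^ d) : ℝ) ≤ n := by exact_mod_cast grid_le _ _ _
    rw [grid_zero]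
    calc _ = ((d : ℝ) + 1) ^ 4 * (K * (m * (grid n B (0 + 2 ^ d) : ℝ))) := by
            push_cast; ring
      _ ≤ _ := by gcongr

/-! ### Maxima of centred sums of nonnegative variables -/

lemma sq_integral_le {Ω : Type*} [MeasureSpace Ω] [IsProbabilityMeasure (volume : Measure Ω)]
    {M : Ω → ℝ} (hM : MemLp M 2 volume) : (∫ ω, M ω) ^ 2 ≤ ∫ ω, M ω ^ 2 := by
  have h := variance_nonneg M volume
  rw [variance_eq_sub hM] at h
  simpa using h

/-- `Dom m n Y c`: the maximum over `u ≤ m`, `v ≤ n` of the absolute centred partial sums of `Y`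
is dominated by an integrable `Q ≥ 0` with `E Q ≤ c`. Indices start at `0` here. -/
def Dom {Ω : Type*} [MeasureSpace Ω] (m n : ℕ) (Y : ℕ → ℕ → Ω → ℝ) (c : ℝ) : Prop :=
  ∃ Q : Ω → ℝ, (∀ ω, 0 ≤ Q ω) ∧ Integrable Q ∧
    (∀ u ≤ m, ∀ v ≤ n, ∀ ω, |blk (fun i j => Y i j ω - ∫ ω', Y i j ω') 0 u 0 v| ≤ Q ω) ∧
    ∫ ω, Q ω ≤ c

section Dom
variable {Ω : Type*} [MeasureSpace Ω] {m n : ℕ} {Y Y' : ℕ → ℕ → Ω → ℝ} {c c' : ℝ}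

lemma Dom.mono (h : Dom m n Y c) (hc : c ≤ c') : Dom m n Y c' := by
  obtain ⟨Q, h1, h2, h3, h4⟩ := h
  exact ⟨Q, h1, h2, h3, h4.trans hc⟩

lemma Dom.add (h : Dom m n Y c) (h' : Dom m n Y' c') (hi : ∀ i j, Integrable (Y i j))
    (hi' : ∀ i j, Integrable (Y' i j)) :
    Dom m n (fun i j ω => Y i j ω + Y' i j ω) (c + c') := by
  obtain ⟨Q, h1, h2, h3, h4⟩ := h
  obtain ⟨Q', h1', h2', h3', h4'⟩ := h'
  refine ⟨fun ω => Q ω + Q' ω, fun ω => add_nonneg (h1 ω) (h1' ω), h2.add h2', ?_, ?_⟩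
  · intro u hu v hv ω
    have e : (fun i j => Y i j ω + Y' i j ω - ∫ ω', (Y i j ω' + Y' i j ω')) =
        fun i j => (Y i j ω - ∫ ω', Y i j ω') + (Y' i j ω - ∫ ω', Y' i j ω') := by
      ext i j
      rw [integral_add (hi i j) (hi' i j)]
      ring
    rw [e, blk_add]
    exact (abs_add_le _ _).trans (add_le_add (h3 u hu v hv ω) (h3' u hu v hv ω))
  · rw [integral_add h2 h2']
    exact add_le_add h4 h4'

lemma Dom.neg (h : Dom m n Y c) : Dom m n (fun i j ω => -Y i j ω) c := by
  obtain ⟨Q, h1, h2, h3, h4⟩ := h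
  refine ⟨Q, h1, h2, fun u hu v hv ω => ?_, h4⟩
  have e : blk (fun i j => -Y i j ω - ∫ ω', -Y i j ω') 0 u 0 v =
      -blk (fun i j => Y i j ω - ∫ ω', Y i j ω') 0 u 0 v := by
    simp only [blk, integral_neg, ← Finset.sum_neg_distrib]
    refine Finset.sum_congr rfl fun i _ => Finset.sum_congr rfl fun j _ => ?_
    ring
  rw [e, abs_neg]
  exact h3 u hu v hv ω

/-- The crude bound: no cancellation, only `|Y - E Y| ≤ Y + E Y`. -/
lemma dom_of_nonneg [IsProbabilityMeasure (volume : Measure Ω)] {y : ℝ}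
    (h0 : ∀ i j ω, 0 ≤ Y i j ω) (hi : ∀ i j, Integrable (Y i j))
    (hy : ∀ i j, ∫ ω, Y i j ω ≤ y) (m n : ℕ) : Dom m n Y (2 * (m * n) * y) := by
  have hE : ∀ i j, 0 ≤ ∫ ω, Y i j ω := fun i j => integral_nonneg (h0 i j)
  have hint : ∀ i j, Integrable fun ω => Y i j ω + ∫ ω', Y i j ω' := fun i j =>
    (hi i j).add (integrable_const _)
  refine ⟨fun ω => blk (fun i j => Y i j ω + ∫ ω', Y i j ω') 0 m 0 n, ?_, ?_, ?_, ?_⟩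
  · intro ω
    exact Finset.sum_nonneg fun i _ => Finset.sum_nonneg fun j _ =>
      add_nonneg (h0 i j ω) (hE i j)
  · exact integrable_finsetSum _ fun i _ => integrable_finsetSum _ fun j _ => hint i j
  · intro u hu v hv ω
    refine (blk_le_blk_abs _ hu hv).trans ?_
    refine Finset.sum_le_sum fun i _ => Finset.sum_le_sum fun j _ => ?_
    refine (abs_sub _ _).trans ?_
    rw [abs_of_nonneg (h0 i j ω), abs_of_nonneg (hE i j)]
  · simp only [blk]
    rw [integral_finsetSum _ fun i _ => integrable_finsetSum _ fun j _ => hint i j]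
    calc _ = blk (fun i j => 2 * ∫ ω, Y i j ω) 0 m 0 n := by
          refine Finset.sum_congr rfl fun i _ => ?_
          rw [integral_finsetSum _ fun j _ => hint i j]
          refine Finset.sum_congr rfl fun j _ => ?_
          rw [integral_add (hi i j) (integrable_const _)]
          simp
          ring
      _ ≤ blk (fun _ _ => 2 * y) 0 m 0 n :=
          Finset.sum_le_sum fun i _ => Finset.sum_le_sum fun j _ => by
            have := hy i j
            linarith
      _ = _ := by rw [blk_const]; ring

/-- For nonnegative variables the partial sums are monotone in both corners, so it suffices to
control the centred sums on a `2^d × 2^d` grid; rounding a corner to the grid only costs the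
mean of the sum over at most `2mn / 2^d` cells. -/
lemma dom_of_variance [IsProbabilityMeasure (volume : Measure Ω)] {y K : ℝ}
    (h0 : ∀ i j ω, 0 ≤ Y i j ω) (hL : ∀ i j, MemLp (Y i j) 2 volume)
    (hy : ∀ i j, ∫ ω, Y i j ω ≤ y)
    (hV : ∀ s t s' t', s ≤ t → s' ≤ t' →
      ∫ ω, (blk (fun i j => Y i j ω - ∫ ω', Y i j ω') s t s' t') ^ 2
        ≤ K * (((t : ℝ) - s) * ((t' : ℝ) - s'))) (m n d : ℕ) :
    Dom m n Y (((d : ℝ) + 1) ^ 2 * √(K * (m * n)) + 2 * ((m * n) / 2 ^ d) * y) := by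
  have hE : ∀ i j, 0 ≤ ∫ ω, Y i j ω := fun i j => integral_nonneg (h0 i j)
  have hy0 : 0 ≤ y := (hE 0 0).trans (hy 0 0)
  obtain ⟨M, h1, h2, h3, h4⟩ := grid_max (Y := fun i j ω => Y i j ω - ∫ ω', Y i j ω')
    (fun i j => (hL i j).sub (memLp_const _)) hV m n (m / 2 ^ d + 1) (n / 2 ^ d + 1) d
  have hMi : Integrable M := h2.integrable (by norm_num)
  set e : ℝ := 2 * ((m * n) / 2 ^ d) * y with he
  have he0 : 0 ≤ e := by positivity
  -- a rectangle grows by at most `2mn / 2^d` cells when its corner is moved to the grid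
  have key : ∀ u u' v v' : ℕ, u' ≤ m → v ≤ n → u ≤ u' → v ≤ v' → u' ≤ u + m / 2 ^ d →
      v' ≤ v + n / 2 ^ d →
      blk (fun i j => ∫ ω, Y i j ω) 0 u' 0 v' - blk (fun i j => ∫ ω, Y i j ω) 0 u 0 v ≤ e := by
    intro u u' v v' hu' hv huu hvv h5 h6
    refine (blk_diff_le hy huu hvv).trans ?_
    rw [he]
    refine mul_le_mul_of_nonneg_right ?_ hy0
    have a1 : (u' : ℝ) ≤ m := by exact_mod_cast hu'
    have a2 : (v : ℝ) ≤ n := by exact_mod_cast hv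
    have a3 : (u' : ℝ) - u ≤ m / 2 ^ d := by
      have : (u' : ℝ) ≤ u + (m / 2 ^ d : ℕ) := by exact_mod_cast h5
      have h' : ((m / 2 ^ d : ℕ) : ℝ) ≤ m / 2 ^ d := by
        simpa using Nat.cast_div_le (α := ℝ) (m := m) (n := 2 ^ d)
      linarith
    have a4 : (v' : ℝ) - v ≤ n / 2 ^ d := by
      have : (v' : ℝ) ≤ v + (n / 2 ^ d : ℕ) := by exact_mod_cast h6
      have h' : ((n / 2 ^ d : ℕ) : ℝ) ≤ n / 2 ^ d := by
        simpa using Nat.cast_div_le (α := ℝ) (m := n) (n := 2 ^ d)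
      linarith
    have a5 : (0 : ℝ) ≤ (v' : ℝ) - v := sub_nonneg.2 (by exact_mod_cast hvv)
    calc (u' : ℝ) * v' - u * v = u' * (v' - v) + (u' - u) * v := by ring
      _ ≤ m * (n / 2 ^ d) + (m / 2 ^ d) * n := by gcongr
      _ = _ := by ring
  refine ⟨fun ω => M ω + e, fun ω => add_nonneg (h1 ω) he0, hMi.add (integrable_const _),
    ?_, ?_⟩
  · intro u hu v hv ω
    obtain ⟨i, hi, i1, i2⟩ := exists_grid_lower m d u hu
    obtain ⟨j, hj, j1, j2⟩ := exists_grid_lower n d v hv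
    obtain ⟨i', hi', i1', i2'⟩ := exists_grid_upper m d u hu
    obtain ⟨j', hj', j1', j2'⟩ := exists_grid_upper n d v hv
    have lo := abs_le.1 (h3 i hi j hj ω)
    have up := abs_le.1 (h3 i' hi' j' hj' ω)
    have klo := key _ _ _ _ hu (j1.trans hv) i1 j1 i2 j2
    have kup := key _ _ _ _ (grid_le _ _ _) hv i1' j1' i2' j2'
    have mlo := blk_mono (fun i j => h0 i j ω) i1 j1
    have mup := blk_mono (fun i j => h0 i j ω) i1' j1'
    rw [blk_sub] at lo up ⊢
    rw [abs_le]
    constructor <;> linarith [lo.1, up.2]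
  · rw [integral_add hMi (integrable_const _)]
    have : ∫ ω, M ω ≤ ((d : ℝ) + 1) ^ 2 * √(K * (m * n)) := by
      refine (Real.le_sqrt_of_sq_le ((sq_integral_le h2).trans h4)).trans (le_of_eq ?_)
      rw [Real.sqrt_mul (by positivity), show ((d : ℝ) + 1) ^ 4 = (((d : ℝ) + 1) ^ 2) ^ 2 by ring,
        Real.sqrt_sq (by positivity)]
    simpa using this
end Dom

/-! ### Truncation -/

/-- `z^p · 1(z > t)`. -/
def tailPow (p t z : ℝ) : ℝ := if t < z then z ^ p else 0

lemma tailPow_nonneg (p t : ℝ) {z : ℝ} (hz : 0 ≤ z) : 0 ≤ tailPow p t z := by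
  unfold tailPow
  split_ifs
  · positivity
  · rfl

lemma tailPow_le (p t : ℝ) {z : ℝ} (hz : 0 ≤ z) : tailPow p t z ≤ z ^ p := by
  unfold tailPow
  split_ifs
  · rfl
  · positivity

lemma trunc_diff_le {p z b c : ℝ} (hp : 1 ≤ p) (hb : 0 < b) (hc : b ≤ c) (hcz : c ≤ z) :
    c - b ≤ b ^ (1 - p) * z ^ p := by
  have hz : 0 < z := by linarith
  calc c - b ≤ z := by linarith
    _ = z ^ (1 - p) * z ^ p := by
      rw [← Real.rpow_add hz]
      simp
    _ ≤ b ^ (1 - p) * z ^ p := by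
      refine mul_le_mul_of_nonneg_right ?_ (by positivity)
      exact Real.rpow_le_rpow_of_nonpos hb (by linarith) (by linarith)

lemma sub_min_le {p z b : ℝ} (hp : 1 ≤ p) (hb : 0 < b) :
    z - min z b ≤ b ^ (1 - p) * tailPow p b z := by
  unfold tailPow
  split_ifs with h
  · rw [min_eq_right h.le]
    exact trunc_diff_le hp hb h.le le_rfl
  · rw [min_eq_left (not_lt.1 h)]
    simp

lemma min_sub_min_le {p z b : ℝ} (c : ℝ) (hp : 1 ≤ p) (hb : 0 < b) :
    min z c - min z b ≤ b ^ (1 - p) * tailPow p b z :=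
  (sub_le_sub_right (min_le_left _ _) _).trans (sub_min_le hp hb)

lemma min_sub_min_sq_le {p z b c : ℝ} (hp1 : 1 ≤ p) (hp : p < 2) (hb : 0 < b) (hc : b ≤ c) :
    (min z c - min z b) ^ 2 ≤ c ^ (2 - p) * tailPow p b z := by
  unfold tailPow
  split_ifs with h
  · have hm : 0 < min z c := lt_min (by linarith) (by linarith)
    rw [min_eq_right h.le]
    have hz : 0 < z := by linarith
    have hbm : b ≤ min z c := le_min h.le hc
    calc (min z c - b) ^ 2 ≤ (min z c) ^ 2 := by
          apply pow_le_pow_left₀ <;> linarith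
      _ = (min z c) ^ (2 - p) * (min z c) ^ p := by
        rw [← Real.rpow_add hm]
        simp
      _ ≤ c ^ (2 - p) * z ^ p := by
        refine mul_le_mul ?_ ?_ (by positivity) (Real.rpow_nonneg (by linarith) _)
        · exact Real.rpow_le_rpow hm.le (min_le_right _ _) (by linarith)
        · exact Real.rpow_le_rpow hm.le (min_le_left _ _) (by linarith)
  · rw [min_eq_left (not_lt.1 h), min_eq_left ((not_lt.1 h).trans hc)]
    simp

lemma monotone_min_sub_min {b c : ℝ} (hc : b ≤ c) : Monotone fun x => min x c - min x b := by
  intro x y hxy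
  simp only
  rcases le_total x b with h | h <;> rcases le_total y b with h' | h' <;>
    rcases le_total x c with h2 | h2 <;> rcases le_total y c with h3 | h3 <;>
    simp only [min_eq_left, min_eq_right, *] <;> linarith

lemma min_sub_min_mem {b c : ℝ} (hc : b ≤ c) (x : ℝ) :
    0 ≤ min x c - min x b ∧ min x c - min x b ≤ c - b := by
  rcases le_total x b with h | h <;> rcases le_total x c with h2 | h2 <;>
    simp only [min_eq_left, min_eq_right, *] <;> constructor <;> linarith

lemma measurable_tailPow (p t : ℝ) : Measurable (tailPow p t) :=
  Measurable.ite measurableSet_Ioi (by fun_prop) measurable_const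

/-! ### Summing the slices -/

/-- The ratio `2^{-1/p}` of consecutive truncation levels: a level drops by this factor when its
`p`-th power is halved. -/
def qq (p : ℝ) : ℝ := 2 ^ (-(1 / p))

lemma qq_pos (p : ℝ) : 0 < qq p := Real.rpow_pos_of_pos (by norm_num) _

lemma qq_lt_one {p : ℝ} (hp : 1 ≤ p) : qq p < 1 :=
  Real.rpow_lt_one_of_one_lt_of_neg (by norm_num) (by
    have : 0 < 1 / p := by positivity
    linarith)

lemma qq_rpow {p : ℝ} (hp : 1 ≤ p) : qq p ^ p = 1 / 2 := by
  unfold qq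
  rw [← Real.rpow_mul (by norm_num)]
  have : -(1 / p) * p = -1 := by field_simp
  rw [this, Real.rpow_neg_one]
  norm_num

/-- The contribution, relative to `b`, of the slice between the levels `b (qq p)^d` and
`b (qq p)^(d+1)` treated on a `2^d × 2^d` grid: fluctuation on the grid plus rounding error.
`κ` bounds the truncated `p`-th moments and `C` is the constant of the variance bound. -/
def scaleTerm (p C : ℝ) (κ : ℝ → ℝ) (b : ℝ) (d : ℕ) : ℝ :=
  ((d : ℝ) + 1) ^ 2 * (qq p ^ ((2 - p) / 2)) ^ d * √(C * κ (b * qq p ^ (d + 1)))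
    + 2 * qq p ^ (1 - p) * qq p ^ d * κ (b * qq p ^ (d + 1))

/-- The bound of `dom_of_variance` for the `d`-th slice equals `b * scaleTerm`, where
`mn = b^p`. -/
lemma scale_arith {p C b k : ℝ} (hp : 1 ≤ p) (hb : 0 < b) (d : ℕ) :
    ((d : ℝ) + 1) ^ 2 * √(C * ((b * qq p ^ d) ^ (2 - p) * k) * b ^ p)
      + 2 * (b ^ p / 2 ^ d) * ((b * qq p ^ (d + 1)) ^ (1 - p) * k)
    = b * (((d : ℝ) + 1) ^ 2 * (qq p ^ ((2 - p) / 2)) ^ d * √(C * k)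
    + 2 * qq p ^ (1 - p) * qq p ^ d * k) := by
  have hq := qq_pos p
  set q := qq p with hqdef
  have e1 : C * ((b * q ^ d) ^ (2 - p) * k) * b ^ p =
      (b * (q ^ ((2 - p) / 2)) ^ d) ^ 2 * (C * k) := by
    have h1 : (b * q ^ d) ^ (2 - p) * b ^ p = (b * (q ^ ((2 - p) / 2)) ^ d) ^ 2 := by
      rw [Real.mul_rpow hb.le (by positivity), mul_pow, mul_right_comm, ← Real.rpow_add hb]
      congr 1
      · simp
      · rw [← Real.rpow_natCast, ← Real.rpow_natCast, ← Real.rpow_natCast, ← Real.rpow_mul hq.le,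
          ← Real.rpow_mul hq.le, ← Real.rpow_mul hq.le]
        congr 1
        push_cast
        ring
    calc _ = ((b * q ^ d) ^ (2 - p) * b ^ p) * (C * k) := by ring
      _ = _ := by rw [h1]
  have e2 : b ^ p / 2 ^ d * (b * q ^ (d + 1)) ^ (1 - p) = b * (q ^ (1 - p) * q ^ d) := by
    have h2 : (1 : ℝ) / 2 ^ d = q ^ (p * d) := by
      rw [Real.rpow_mul hq.le, qq_rpow hp, Real.rpow_natCast]
      simp
    calc _ = b ^ p * (b * q ^ (d + 1)) ^ (1 - p) * (1 / 2 ^ d) := by ring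
      _ = b ^ p * b ^ (1 - p) * ((q ^ (d + 1)) ^ (1 - p) * q ^ (p * d)) := by
        rw [h2, Real.mul_rpow hb.le (by positivity)]
        ring
      _ = b * (q ^ (1 - p) * q ^ d) := by
        rw [← Real.rpow_add hb, ← Real.rpow_natCast, ← Real.rpow_natCast, ← Real.rpow_mul hq.le,
          ← Real.rpow_add hq, ← Real.rpow_add hq]
        congr 1
        · simp
        · congr 1
          push_cast
          ring
  rw [e1, Real.sqrt_mul (by positivity), Real.sqrt_sq (by positivity)]
  calc _ = ((d : ℝ) + 1) ^ 2 * (b * (q ^ ((2 - p) / 2)) ^ d * √(C * k)) +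
        2 * (b ^ p / 2 ^ d * (b * q ^ (d + 1)) ^ (1 - p)) * k := by ring
    _ = _ := by rw [e2]; ring

lemma integrable_of_rpow_integrable {Ω : Type*} [MeasureSpace Ω]
    [IsProbabilityMeasure (volume : Measure Ω)] {p : ℝ} (hp : 1 ≤ p) {W : Ω → ℝ}
    (hm : Measurable W) (h0 : ∀ ω, 0 ≤ W ω) (hW : Integrable fun ω => W ω ^ p) :
    Integrable W := by
  refine ((integrable_const (1 : ℝ)).add hW).mono' hm.aestronglyMeasurable
    (Eventually.of_forall fun ω => ?_)
  rw [Real.norm_of_nonneg (h0 ω)]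
  simp only [Pi.add_apply]
  rcases le_total (W ω) 1 with h | h
  · have : 0 ≤ W ω ^ p := Real.rpow_nonneg (h0 ω) _
    linarith
  · have := Real.self_le_rpow_of_one_le h hp
    linarith

/-- The form of Condition `(H_2)` used here: one bounded nondecreasing `f` for the whole array, and
rectangular index sets. -/
def VarBound {Ω : Type*} [MeasureSpace Ω] (C : ℝ) (Z : ℕ → ℕ → Ω → ℝ) : Prop :=
  ∀ f : ℝ → ℝ, Monotone f → ∀ B : ℝ, (∀ x, |f x| ≤ B) → ∀ w : ℝ,
    (∀ i j, ∫ ω, f (Z i j ω) ^ 2 ≤ w) → ∀ s t s' t' : ℕ, s ≤ t → s' ≤ t' →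
      ∫ ω, (blk (fun i j => f (Z i j ω) - ∫ ω', f (Z i j ω')) s t s' t') ^ 2
        ≤ C * w * (((t : ℝ) - s) * ((t' : ℝ) - s'))

/-- The estimate for nonnegative variables at the scale `b = (mn)^{1/p}`: split `Z` at the levels
`b · (qq p)^d`, `0 ≤ d ≤ D`, bound the excess over the top level and the part below the bottom
level crudely in `L¹`, and each slice in between by `dom_of_variance`. The constants `S`, `η`
do not depend on the number `D` of levels, which is chosen large in terms of `m`, `n`, `η`. -/
lemma core {Ω : Type*} [MeasureSpace Ω] [IsProbabilityMeasure (volume : Measure Ω)]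
    {p C : ℝ} (hp1 : 1 ≤ p) (hp2 : p < 2) {Z : ℕ → ℕ → Ω → ℝ}
    (hm : ∀ i j, Measurable (Z i j)) (h0 : ∀ i j ω, 0 ≤ Z i j ω)
    (hZp : ∀ i j, Integrable fun ω => Z i j ω ^ p) {κ : ℝ → ℝ}
    (hκ : ∀ i j t, ∫ ω, tailPow p t (Z i j ω) ≤ κ t) (hV : VarBound C Z)
    (m n : ℕ) {b : ℝ} (hb : 0 < b) (hbp : b ^ p = m * n) {S η : ℝ} (hη : 0 < η)
    (hS : ∀ D, ∑ d ∈ Finset.range D, scaleTerm p C κ b d ≤ S) :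
    Dom m n Z (b * (2 * κ b + S + η)) := by
  have hq := qq_pos p
  have hq1 := qq_lt_one hp1
  have hti : ∀ i j t, Integrable fun ω => tailPow p t (Z i j ω) := fun i j t =>
    (hZp i j).mono' ((measurable_tailPow p t).comp (hm i j)).aestronglyMeasurable
      (Eventually.of_forall fun ω => by
        rw [Real.norm_of_nonneg (tailPow_nonneg p t (h0 i j ω))]
        exact tailPow_le p t (h0 i j ω))
  have hmini : ∀ c : ℝ, 0 ≤ c → ∀ i j, MemLp (fun ω => min (Z i j ω) c) 2 volume :=
    fun c hc i j => MemLp.of_bound ((hm i j).min measurable_const).aestronglyMeasurable c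
      (Eventually.of_forall fun ω => by
        rw [Real.norm_of_nonneg (le_min (h0 i j ω) hc)]
        exact min_le_right _ _)
  have hminI : ∀ c : ℝ, 0 ≤ c → ∀ i j, Integrable fun ω => min (Z i j ω) c :=
    fun c hc i j => (hmini c hc i j).integrable (by norm_num)
  have hZi : ∀ i j, Integrable (Z i j) := fun i j =>
    integrable_of_rpow_integrable hp1 (hm i j) (h0 i j) (hZp i j)
  -- the part above the top level `b`
  have top : Dom m n (fun i j ω => Z i j ω - min (Z i j ω) b) (b * (2 * κ b)) := by
    refine (dom_of_nonneg (y := b ^ (1 - p) * κ b) (fun i j ω => sub_nonneg.2 (min_le_left _ _))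
      (fun i j => (hZi i j).sub (hminI b hb.le i j)) (fun i j => ?_) m n).mono (le_of_eq ?_)
    · calc _ ≤ ∫ ω, b ^ (1 - p) * tailPow p b (Z i j ω) :=
            integral_mono ((hZi i j).sub (hminI b hb.le i j)) ((hti i j b).const_mul _)
              fun ω => sub_min_le hp1 hb
        _ ≤ _ := by
            rw [integral_const_mul]
            exact mul_le_mul_of_nonneg_left (hκ i j b) (by positivity)
    · rw [← hbp]
      have : b ^ p * b ^ (1 - p) = b := by
        rw [← Real.rpow_add hb]
        simp
      calc _ = 2 * (b ^ p * b ^ (1 - p)) * κ b := by ring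
        _ = _ := by rw [this]; ring
  -- one slice between consecutive levels
  have slice : ∀ d : ℕ, Dom m n
      (fun i j ω => min (Z i j ω) (b * qq p ^ d) - min (Z i j ω) (b * qq p ^ (d + 1)))
      (b * scaleTerm p C κ b d) := by
    intro d
    have hlo : 0 < b * qq p ^ (d + 1) := by positivity
    have hle : b * qq p ^ (d + 1) ≤ b * qq p ^ d :=
      mul_le_mul_of_nonneg_left (pow_le_pow_of_le_one hq.le hq1.le (by omega)) hb.le
    have hL : ∀ i j, MemLp (fun ω => min (Z i j ω) (b * qq p ^ d)
        - min (Z i j ω) (b * qq p ^ (d + 1))) 2 volume := fun i j =>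
      (hmini _ (hlo.le.trans hle) i j).sub (hmini _ hlo.le i j)
    have hw : ∀ i j, ∫ ω, (min (Z i j ω) (b * qq p ^ d)
        - min (Z i j ω) (b * qq p ^ (d + 1))) ^ 2
          ≤ (b * qq p ^ d) ^ (2 - p) * κ (b * qq p ^ (d + 1)) := fun i j => by
      calc _ ≤ ∫ ω, (b * qq p ^ d) ^ (2 - p) * tailPow p (b * qq p ^ (d + 1)) (Z i j ω) :=
            integral_mono (hL i j).integrable_sq ((hti i j _).const_mul _)
              fun ω => min_sub_min_sq_le hp1 hp2 hlo hle
        _ ≤ _ := by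
            rw [integral_const_mul]
            exact mul_le_mul_of_nonneg_left (hκ i j _) (by positivity)
    have hy : ∀ i j, ∫ ω, (min (Z i j ω) (b * qq p ^ d)
        - min (Z i j ω) (b * qq p ^ (d + 1)))
          ≤ (b * qq p ^ (d + 1)) ^ (1 - p) * κ (b * qq p ^ (d + 1)) := fun i j => by
      calc _ ≤ ∫ ω, (b * qq p ^ (d + 1)) ^ (1 - p)
              * tailPow p (b * qq p ^ (d + 1)) (Z i j ω) :=
            integral_mono ((hL i j).integrable (by norm_num)) ((hti i j _).const_mul _)
              fun ω => min_sub_min_le _ hp1 hlo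
        _ ≤ _ := by
            rw [integral_const_mul]
            exact mul_le_mul_of_nonneg_left (hκ i j _) (by positivity)
    refine (dom_of_variance (fun i j ω => (min_sub_min_mem hle _).1) hL hy
      (hV (fun x => min x (b * qq p ^ d) - min x (b * qq p ^ (d + 1)))
        (monotone_min_sub_min hle) (b * qq p ^ d - b * qq p ^ (d + 1)) (fun x => by
          rw [abs_of_nonneg (min_sub_min_mem hle x).1]
          exact (min_sub_min_mem hle x).2) _ hw) m n d).mono (le_of_eq ?_)
    rw [← hbp, scaleTerm]
    exact scale_arith hp1 hb d
  have slices : ∀ D : ℕ, Dom m n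
      (fun i j ω => min (Z i j ω) b - min (Z i j ω) (b * qq p ^ D))
      (b * ∑ d ∈ Finset.range D, scaleTerm p C κ b d) := by
    intro D
    induction D with
    | zero =>
      refine ⟨fun _ => 0, fun _ => le_rfl, integrable_zero _ _ _, ?_, ?_⟩ <;> simp [blk]
    | succ D ih =>
      have h := ih.add (slice D)
        (fun i j => (hminI _ hb.le i j).sub (hminI _ (by positivity) i j))
        (fun i j => (hminI _ (by positivity) i j).sub (hminI _ (by positivity) i j))
      rw [Finset.sum_range_succ, mul_add]
      convert h using 3
      funext ω
      ring
  -- the lowest level is so small that the remaining part is negligible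
  obtain ⟨D, hD⟩ : ∃ D : ℕ, 2 * (b ^ p) * qq p ^ D < η := by
    have h := (tendsto_pow_atTop_nhds_zero_of_lt_one hq.le hq1).const_mul (2 * b ^ p)
    rw [mul_zero] at h
    exact (h.eventually_lt_const hη).exists
  have hqD : 0 ≤ b * qq p ^ D := by positivity
  have bot : Dom m n (fun i j ω => min (Z i j ω) (b * qq p ^ D)) (b * η) := by
    refine (dom_of_nonneg (y := b * qq p ^ D) (fun i j ω => le_min (h0 i j ω) hqD)
      (fun i j => hminI _ hqD i j) (fun i j => ?_) m n).mono ?_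
    · calc _ ≤ ∫ ω : Ω, b * qq p ^ D :=
            integral_mono (hminI _ hqD i j) (integrable_const _) fun ω => min_le_right _ _
        _ = _ := by simp
    · rw [← hbp]
      calc _ = b * (2 * (b ^ p) * qq p ^ D) := by ring
        _ ≤ _ := mul_le_mul_of_nonneg_left hD.le hb.le
  have h := (top.add (slices D) (fun i j => (hZi i j).sub (hminI b hb.le i j))
    (fun i j => (hminI _ hb.le i j).sub (hminI _ hqD i j))).add bot
    (fun i j => ((hZi i j).sub (hminI b hb.le i j)).add
      ((hminI _ hb.le i j).sub (hminI _ hqD i j))) (fun i j => hminI _ hqD i j)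
  have h' : Dom m n Z (b * (2 * κ b) + b * ∑ d ∈ Finset.range D, scaleTerm p C κ b d + b * η) := by
    convert h using 3
    funext ω
    ring
  refine h'.mono ?_
  rw [← mul_add, ← mul_add]
  have := hS D
  gcongr

lemma scaleTerm_nonneg {p C : ℝ} {κ : ℝ → ℝ} (hκ0 : ∀ t, 0 ≤ κ t) (b : ℝ) (d : ℕ) :
    0 ≤ scaleTerm p C κ b d := by
  have hq := qq_pos p
  have := hκ0 (b * qq p ^ (d + 1))
  unfold scaleTerm
  positivity

/-- Dominated convergence for the series of slice contributions: it is dominated by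
`(d+1)² r^d + const · (qq p)^d` with `r = (qq p)^{(2-p)/2} < 1`, which is where `p < 2` enters. -/
lemma scaleTerm_tsum {p C k₀ : ℝ} (hp1 : 1 ≤ p) (hp2 : p < 2) (hC : 0 ≤ C) {κ : ℝ → ℝ}
    (hκ0 : ∀ t, 0 ≤ κ t) (hκk : ∀ t, 0 ≤ t → κ t ≤ k₀) (hκ : Tendsto κ atTop (nhds 0)) :
    (∀ b, 0 < b → Summable (scaleTerm p C κ b)) ∧
      Tendsto (fun b => ∑' d, scaleTerm p C κ b d) atTop (nhds 0) := by
  have hq := qq_pos p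
  have hq1 := qq_lt_one hp1
  let bd : ℕ → ℝ := fun d =>
    ((d : ℝ) + 1) ^ 2 * (qq p ^ ((2 - p) / 2)) ^ d * √(C * k₀)
      + 2 * qq p ^ (1 - p) * qq p ^ d * k₀
  have hr : qq p ^ ((2 - p) / 2) < 1 := Real.rpow_lt_one hq.le hq1 (by linarith)
  have hr0 : 0 < qq p ^ ((2 - p) / 2) := by positivity
  have hbd : Summable bd := by
    refine Summable.add (Summable.mul_right _ ?_) (Summable.mul_right _ ?_)
    · have h1 := summable_pow_mul_geometric_of_norm_lt_one 2
        (r := qq p ^ ((2 - p) / 2)) (by rwa [Real.norm_of_nonneg hr0.le])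
      have h2 := (summable_nat_add_iff 1).2 h1
      have h3 := h2.mul_right (qq p ^ ((2 - p) / 2))⁻¹
      refine h3.congr fun d => ?_
      push_cast
      rw [pow_succ (qq p ^ ((2 - p) / 2)) d]
      field_simp
    · exact (summable_geometric_of_lt_one hq.le hq1).mul_left _
  have hle : ∀ b, 0 < b → ∀ d, scaleTerm p C κ b d ≤ bd d := by
    intro b hb d
    have := hκk (b * qq p ^ (d + 1)) (by positivity)
    simp only [scaleTerm, bd]
    gcongr
  refine ⟨fun b hb => Summable.of_nonneg_of_le (scaleTerm_nonneg hκ0 b) (hle b hb) hbd, ?_⟩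
  have h := tendsto_tsum_of_dominated_convergence (𝓕 := atTop)
    (f := fun b d => scaleTerm p C κ b d) (g := fun _ => 0) hbd (fun d => ?_) ?_
  · simpa using h
  · have hk : Tendsto (fun b => κ (b * qq p ^ (d + 1))) atTop (nhds 0) :=
      hκ.comp (tendsto_id.atTop_mul_const (by positivity))
    have h1 := (((hk.const_mul C).sqrt).const_mul
      (((d : ℝ) + 1) ^ 2 * (qq p ^ ((2 - p) / 2)) ^ d)).add
      (hk.const_mul (2 * qq p ^ (1 - p) * qq p ^ d))
    simpa [scaleTerm] using h1
  · filter_upwards [eventually_gt_atTop 0] with b hb d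
    rw [Real.norm_of_nonneg (scaleTerm_nonneg hκ0 b d)]
    exact hle b hb d

/-! ### From Condition `(H_2)` and uniform integrability to the estimate -/

lemma varBound_of_condH {Ω : Type*} [MeasureSpace Ω] [IsProbabilityMeasure (volume : Measure Ω)]
    {X : ℕ → ℕ → Ω → ℝ} {C : ℝ} (hm : ∀ i j, Measurable (X (i + 1) (j + 1)))
    (hH : CondHWith 1 C fun k : PIdx => X k.1.1 k.1.2) :
    VarBound (2 * max C 0) fun i j => X (i + 1) (j + 1) := by
  intro f hf B hB w hw s t s' t' hst hst'
  have hst0 : (0 : ℝ) ≤ (t : ℝ) - s := sub_nonneg.2 (by exact_mod_cast hst)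
  have hst0' : (0 : ℝ) ≤ (t' : ℝ) - s' := sub_nonneg.2 (by exact_mod_cast hst')
  have hw0 : 0 ≤ w := (integral_nonneg fun ω => sq_nonneg _).trans (hw 0 0)
  have hL : ∀ i j, MemLp (fun ω => f (X (i + 1) (j + 1) ω)) 2 volume := fun i j =>
    MemLp.of_bound (hf.measurable.comp (hm i j)).aestronglyMeasurable B
      (Eventually.of_forall fun ω => hB _)
  let e : ℕ × ℕ ↪ PIdx := ⟨fun k => ⟨(k.1 + 1, k.2 + 1), by simp⟩, fun k l h => by
    simp only [Subtype.mk.injEq, Prod.mk.injEq, add_left_inj] at h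
    exact Prod.ext h.1 h.2⟩
  set I : Finset PIdx := (Finset.Ico s t ×ˢ Finset.Ico s' t').map e with hI
  have hsum : ∀ g : PIdx → ℝ, ∑ l ∈ I, g l = blk (fun i j => g (e (i, j))) s t s' t' := by
    intro g
    rw [hI, Finset.sum_map, Finset.sum_product]
    rfl
  have hPL : ∀ k : PIdx, MemLp (fun ω => f (X k.1.1 k.1.2 ω)) 2 volume := by
    rintro ⟨⟨i, j⟩, h1, h2⟩
    obtain ⟨i, rfl⟩ := Nat.exists_eq_add_of_le' h1
    obtain ⟨j, rfl⟩ := Nat.exists_eq_add_of_le' h2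
    exact hL i j
  have hPw : ∀ k : PIdx, ∫ ω, f (X k.1.1 k.1.2 ω) ^ 2 ≤ w := by
    rintro ⟨⟨i, j⟩, h1, h2⟩
    obtain ⟨i, rfl⟩ := Nat.exists_eq_add_of_le' h1
    obtain ⟨j, rfl⟩ := Nat.exists_eq_add_of_le' h2
    exact hw i j
  have hcard : (I.card : ℝ) = ((t : ℝ) - s) * ((t' : ℝ) - s') := by
    rw [hI, Finset.card_map, Finset.card_product]
    simp [Nat.cast_sub hst, Nat.cast_sub hst']
  rcases I.eq_empty_or_nonempty with hemp | hne
  · have : ∀ ω, blk (fun i j => f (X (i + 1) (j + 1) ω)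
        - ∫ ω', f (X (i + 1) (j + 1) ω')) s t s' t' = 0 := fun ω => by
      have := hsum fun k => f (X k.1.1 k.1.2 ω) - ∫ ω', f (X k.1.1 k.1.2 ω')
      rw [hemp, Finset.sum_empty] at this
      exact this.symm
    simp only [this]
    simp only [ne_eq, OfNat.ofNat_ne_zero, not_false_eq_true, zero_pow, integral_zero]
    positivity
  · have hr : ∀ x : ℝ, |x| ^ (2 * (1 : ℝ)) = x ^ 2 := fun x => by
      rw [mul_one, Real.rpow_two, sq_abs]
    have h := hH I hne (fun _ => f) (fun _ _ => hf)
      (fun l _ => (hPL l).integrable (by norm_num)) (fun l _ => (hPL l).integrable_sq)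
      (fun l _ => by simpa only [hr] using (hPL l).integrable_sq)
      (by
        simp only [hr]
        exact (memLp_finsetSum _ fun l _ => (hPL l).sub (memLp_const _)).integrable_sq)
    simp only [hr, Real.rpow_one, hsum] at h
    refine h.trans ?_
    set m := I.sup' hne fun l => ∫ ω, f (X l.1.1 l.1.2 ω) ^ 2 with hmdef
    have hmw : m ≤ w := Finset.sup'_le hne _ fun l _ => hPw l
    have hm0 : 0 ≤ m := by
      obtain ⟨l, hl⟩ := hne
      exact (integral_nonneg fun ω => sq_nonneg _).trans
        (Finset.le_sup' (fun l : PIdx => ∫ ω, f (X l.1.1 l.1.2 ω) ^ 2) hl)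
    calc C * (I.card * m + I.card * m) ≤ max C 0 * (I.card * m + I.card * m) := by
          gcongr
          exact le_max_left _ _
      _ ≤ max C 0 * (I.card * w + I.card * w) := by gcongr
      _ = _ := by rw [hcard]; ring

lemma VarBound.posPart {Ω : Type*} [MeasureSpace Ω] {C : ℝ} {Z : ℕ → ℕ → Ω → ℝ}
    (h : VarBound C Z) : VarBound C fun i j ω => max (Z i j ω) 0 := fun f hf B hB w hw =>
  h (fun x => f (max x 0)) (fun _ _ hxy => hf (max_le_max_right 0 hxy)) B (fun _ => hB _) w hw

/-- The negative part is a nonincreasing function of `Z`, so the bound is applied to its negative,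
which has the same variance and the same second moment. -/
lemma VarBound.negPart {Ω : Type*} [MeasureSpace Ω] {C : ℝ} {Z : ℕ → ℕ → Ω → ℝ}
    (h : VarBound C Z) : VarBound C fun i j ω => max (-Z i j ω) 0 := by
  intro f hf B hB w hw s t s' t' hst hst'
  have h' := h (fun x => -f (max (-x) 0))
    (fun _ _ hxy => neg_le_neg (hf (max_le_max_right 0 (neg_le_neg hxy)))) B
    (fun _ => by rw [abs_neg]; exact hB _) w (by simpa only [neg_sq] using hw) s t s' t' hst hst'
  refine le_trans (le_of_eq ?_) h'
  congr 1
  funext ω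
  rw [← neg_sq]
  congr 1
  simp only [blk, integral_neg, ← Finset.sum_neg_distrib]
  refine Finset.sum_congr rfl fun i _ => Finset.sum_congr rfl fun j _ => ?_
  ring

lemma maxDS_le {f : ℕ → ℕ → ℝ} {m n : ℕ} {Q : ℝ} (hQ : 0 ≤ Q)
    (h : ∀ u ≤ m, ∀ v ≤ n, |blk (fun i j => f (i + 1) (j + 1)) 0 u 0 v| ≤ Q) :
    maxDS f m n ≤ Q := by
  have shift : ∀ (g : ℕ → ℝ) (u : ℕ), ∑ i ∈ Finset.Icc 1 u, g i
      = ∑ i ∈ Finset.Ico 0 u, g (i + 1) := fun g u => by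
    rw [Finset.sum_Ico_add' g 0 u 1]
    rfl
  unfold maxDS maxNN
  rw [← Real.coe_toNNReal Q hQ, NNReal.coe_le_coe]
  refine Finset.sup_le fun k hk => Real.toNNReal_le_toNNReal ?_
  simp only [Finset.mem_product, Finset.mem_Icc] at hk
  simp only [shift]
  exact h _ hk.1.2 _ hk.2.2

/-- Uniform integrability of `|X|^p` as a modulus: `κ t = sup E |X|^p 1(|X| > t)` is bounded and
tends to `0`. -/
lemma exists_tail_modulus {Ω : Type*} [MeasureSpace Ω]
    [IsProbabilityMeasure (volume : Measure Ω)] {p : ℝ} (hp1 : 1 ≤ p)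
    {X : ℕ → ℕ → Ω → ℝ} (hm : ∀ m n : ℕ, 1 ≤ m → 1 ≤ n → Measurable (X m n))
    (hui : UnifInt fun (k : PIdx) ω => |X k.1.1 k.1.2 ω| ^ p) :
    ∃ (κ : ℝ → ℝ) (k₀ : ℝ), (∀ t, 0 ≤ κ t) ∧ (∀ t, 0 ≤ t → κ t ≤ k₀) ∧
      Tendsto κ atTop (nhds 0) ∧
      ∀ i j t, ∫ ω, tailPow p t |X (i + 1) (j + 1) ω| ≤ κ t := by
  obtain ⟨hint, hsmall⟩ := hui
  have hmk : ∀ k : PIdx, Measurable (X k.1.1 k.1.2) := fun k => hm _ _ k.2.1 k.2.2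
  have habs : ∀ (k : PIdx) ω, |(|X k.1.1 k.1.2 ω| ^ p)| = |X k.1.1 k.1.2 ω| ^ p := fun k ω =>
    abs_of_nonneg (by positivity)
  simp only [habs] at hsmall
  have hite : ∀ (k : PIdx) (a : ℝ), Integrable fun ω =>
      if a < |X k.1.1 k.1.2 ω| ^ p then |X k.1.1 k.1.2 ω| ^ p else 0 := fun k a => by
    have hmp : Measurable fun ω => |X k.1.1 k.1.2 ω| ^ p := by
      have := hmk k
      fun_prop
    refine (hint k).mono' (Measurable.ite (measurableSet_lt measurable_const hmp) hmp
      measurable_const).aestronglyMeasurable (Eventually.of_forall fun ω => ?_)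
    have : 0 ≤ |X k.1.1 k.1.2 ω| ^ p := by positivity
    split_ifs
    · rw [Real.norm_of_nonneg this]
    · simpa using this
  have htail0 : ∀ (k : PIdx) t, 0 ≤ ∫ ω, tailPow p t |X k.1.1 k.1.2 ω| := fun k t =>
    integral_nonneg fun ω => tailPow_nonneg p t (abs_nonneg _)
  obtain ⟨a₁, ha₁⟩ := hsmall 1 one_pos
  have hbound : ∀ (k : PIdx) t, ∫ ω, tailPow p t |X k.1.1 k.1.2 ω| ≤ |a₁| + 1 := fun k t => by
    calc _ ≤ ∫ ω, (|a₁| + if a₁ < |X k.1.1 k.1.2 ω| ^ p then |X k.1.1 k.1.2 ω| ^ p else 0) := by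
          refine integral_mono_of_nonneg
            (Eventually.of_forall fun ω => tailPow_nonneg p t (abs_nonneg _))
            ((integrable_const _).add (hite k a₁)) (Eventually.of_forall fun ω => ?_)
          refine (tailPow_le p t (abs_nonneg _)).trans ?_
          simp only
          split_ifs with h
          · have := abs_nonneg a₁
            linarith
          · have := le_abs_self a₁
            linarith
      _ ≤ _ := by
          rw [integral_add (integrable_const _) (hite k a₁)]
          simpa using ha₁ k
  refine ⟨fun t => ⨆ k : PIdx, ∫ ω, tailPow p t |X k.1.1 k.1.2 ω|, |a₁| + 1,
    fun t => Real.iSup_nonneg fun k => htail0 k t,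
    fun t _ => Real.iSup_le (fun k => hbound k t) (by positivity), ?_, ?_⟩
  · refine Metric.tendsto_atTop.2 fun ε hε => ?_
    obtain ⟨a, ha⟩ := hsmall (ε / 2) (by positivity)
    refine ⟨max a 1, fun t ht => ?_⟩
    have hle : (⨆ k : PIdx, ∫ ω, tailPow p t |X k.1.1 k.1.2 ω|) ≤ ε / 2 := by
      refine Real.iSup_le (fun k => ?_) (by positivity)
      refine (integral_mono_of_nonneg
        (Eventually.of_forall fun ω => tailPow_nonneg p t (abs_nonneg _))
        (hite k a) (Eventually.of_forall fun ω => ?_)).trans (ha k)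
      simp only [tailPow]
      by_cases h : t < |X k.1.1 k.1.2 ω|
      · have h1 : 1 ≤ |X k.1.1 k.1.2 ω| := ((le_max_right a 1).trans ht).trans h.le
        have h2 : a < |X k.1.1 k.1.2 ω| ^ p :=
          (((le_max_left a 1).trans ht).trans_lt h).trans_le (Real.self_le_rpow_of_one_le h1 hp1)
        rw [if_pos h, if_pos h2]
      · rw [if_neg h]
        split_ifs
        · positivity
        · rfl
    rw [Real.dist_eq, sub_zero, abs_of_nonneg (Real.iSup_nonneg fun k => htail0 k t)]
    linarith
  · intro i j t
    exact le_ciSup (f := fun k : PIdx => ∫ ω, tailPow p t |X k.1.1 k.1.2 ω|)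
      ⟨|a₁| + 1, by rintro _ ⟨k, rfl⟩; exact hbound k t⟩ ⟨(i + 1, j + 1), by simp⟩

/-- The estimate `core` without the sign assumption, from the positive and negative parts. -/
lemma dom_signed {Ω : Type*} [MeasureSpace Ω] [IsProbabilityMeasure (volume : Measure Ω)]
    {p C : ℝ} (hp1 : 1 ≤ p) (hp2 : p < 2) {Z : ℕ → ℕ → Ω → ℝ}
    (hm : ∀ i j, Measurable (Z i j))
    (hZp : ∀ i j, Integrable fun ω => |Z i j ω| ^ p) {κ : ℝ → ℝ}
    (hκ : ∀ i j t, ∫ ω, tailPow p t |Z i j ω| ≤ κ t) (hV : VarBound C Z)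
    (m n : ℕ) {b : ℝ} (hb : 0 < b) (hbp : b ^ p = m * n) {S η : ℝ} (hη : 0 < η)
    (hS : ∀ D, ∑ d ∈ Finset.range D, scaleTerm p C κ b d ≤ S) :
    Dom m n Z (2 * (b * (2 * κ b + S + η))) := by
  have hp0 : 0 < p := by linarith
  have hti : ∀ i j t, Integrable fun ω => tailPow p t |Z i j ω| := fun i j t =>
    (hZp i j).mono' ((measurable_tailPow p t).comp (hm i j).abs).aestronglyMeasurable
      (Eventually.of_forall fun ω => by
        rw [Real.norm_of_nonneg (tailPow_nonneg p t (abs_nonneg _))]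
        exact tailPow_le p t (abs_nonneg _))
  have htm : ∀ t x y : ℝ, 0 ≤ x → x ≤ y → tailPow p t x ≤ tailPow p t y := by
    intro t x y hx hxy
    unfold tailPow
    split_ifs with h1 h2
    · exact Real.rpow_le_rpow hx hxy hp0.le
    · exact absurd (h1.trans_le hxy) h2
    · exact Real.rpow_nonneg (hx.trans hxy) _
    · rfl
  -- everything needed of a nonnegative part `W` of `Z`
  have part : ∀ W : ℕ → ℕ → Ω → ℝ, (∀ i j, Measurable (W i j)) → (∀ i j ω, 0 ≤ W i j ω) →
      (∀ i j ω, W i j ω ≤ |Z i j ω|) → VarBound C W →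
      Dom m n W (b * (2 * κ b + S + η)) ∧ ∀ i j, Integrable (W i j) := by
    intro W hWm hW0 hWZ hWV
    have hWp : ∀ i j, Integrable fun ω => W i j ω ^ p := fun i j =>
      (hZp i j).mono' ((hWm i j).pow_const p).aestronglyMeasurable
        (Eventually.of_forall fun ω => by
          rw [Real.norm_of_nonneg (Real.rpow_nonneg (hW0 i j ω) _)]
          exact Real.rpow_le_rpow (hW0 i j ω) (hWZ i j ω) hp0.le)
    refine ⟨core hp1 hp2 hWm hW0 hWp (fun i j t => ?_) hWV m n hb hbp hη hS,
      fun i j => ?_⟩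
    · exact (integral_mono_of_nonneg
        (Eventually.of_forall fun ω => tailPow_nonneg p t (hW0 i j ω)) (hti i j t)
        (Eventually.of_forall fun ω => htm t _ _ (hW0 i j ω) (hWZ i j ω))).trans (hκ i j t)
    · exact integrable_of_rpow_integrable hp1 (hWm i j) (hW0 i j) (hWp i j)
  obtain ⟨hP, hPi⟩ := part (fun i j ω => max (Z i j ω) 0)
    (fun i j => (hm i j).max measurable_const) (fun i j ω => le_max_right _ _)
    (fun i j ω => max_le (le_abs_self _) (abs_nonneg _)) hV.posPart
  obtain ⟨hN, hNi⟩ := part (fun i j ω => max (-Z i j ω) 0)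
    (fun i j => (hm i j).neg.max measurable_const) (fun i j ω => le_max_right _ _)
    (fun i j ω => max_le (neg_le_abs _) (abs_nonneg _)) hV.negPart
  have h := hP.add hN.neg hPi fun i j => (hNi i j).neg
  convert h using 1
  · funext i j ω
    rcases le_total (Z i j ω) 0 with h | h
    · rw [max_eq_right h, max_eq_left (by linarith)]
      ring
    · rw [max_eq_left h, max_eq_right (by linarith)]
      ring
  · ring

/-- Weak law of large numbers for the maximum of double sums of dependent random
variables under uniform integrability of `{|X_{m,n}|^p}`. -/
theorem wlln_uniform_integrability
    {Ω : Type*} [MeasureSpace Ω] [IsProbabilityMeasure (volume : Measure Ω)]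
    (p : ℝ) (hp1 : 1 ≤ p) (hp2 : p < 2)
    (X : ℕ → ℕ → Ω → ℝ)
    (hmeas : ∀ m n : ℕ, 1 ≤ m → 1 ≤ n → Measurable (X m n))
    (hH : CondH 1 fun k : PIdx => X k.1.1 k.1.2)
    (hui : UnifInt fun (k : PIdx) ω => |X k.1.1 k.1.2 ω| ^ p) :
    ∀ ε : ℝ, 0 < ε → ∀ δ : ℝ, 0 < δ → ∃ N : ℕ, ∀ m n : ℕ,
      1 ≤ m → 1 ≤ n → N ≤ max m n →
        (volume {ω | ε < maxDS (fun i j => X i j ω - ∫ ω', X i j ω') m n /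
          ((m * n : ℕ) : ℝ) ^ (1 / p)}).toReal ≤ δ := by
  intro ε hε δ hδ
  obtain ⟨C, hC⟩ := hH
  have hp0 : 0 < p := by linarith
  have hm : ∀ i j, Measurable (X (i + 1) (j + 1)) := fun i j =>
    hmeas _ _ (Nat.succ_pos i) (Nat.succ_pos j)
  obtain ⟨κ, k₀, hκ0, hκk, hκlim, hκ⟩ := exists_tail_modulus hp1 hmeas hui
  have hV := varBound_of_condH hm hC
  have hC0 : 0 ≤ 2 * max C 0 := mul_nonneg zero_le_two (le_max_right _ _)
  obtain ⟨hsum, hlim⟩ := scaleTerm_tsum hp1 hp2 hC0 hκ0 hκk hκlim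
  have hη : 0 < ε * δ / 4 := by positivity
  have hev : ∀ᶠ b : ℝ in atTop,
      2 * κ b + ∑' d, scaleTerm p (2 * max C 0) κ b d < ε * δ / 4 := by
    have h := (hκlim.const_mul 2).add hlim
    rw [mul_zero, add_zero] at h
    exact h.eventually_lt_const hη
  have hpow : Tendsto (fun N : ℕ => (N : ℝ) ^ (1 / p)) atTop atTop :=
    (tendsto_rpow_atTop (by positivity)).comp tendsto_natCast_atTop_atTop
  obtain ⟨N, hN⟩ := eventually_atTop.1 (hpow.eventually hev)
  refine ⟨N, fun m n hm1 hn1 hmn => ?_⟩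
  have hNmn : N ≤ m * n := hmn.trans (max_le (Nat.le_mul_of_pos_right m hn1)
    (Nat.le_mul_of_pos_left n hm1))
  have hsmall := hN (m * n) hNmn
  set b : ℝ := ((m * n : ℕ) : ℝ) ^ (1 / p) with hbdef
  have hmn0 : (0 : ℝ) < ((m * n : ℕ) : ℝ) := by
    exact_mod_cast Nat.mul_pos hm1 hn1
  have hb : 0 < b := Real.rpow_pos_of_pos hmn0 _
  have hbp : b ^ p = m * n := by
    rw [hbdef, ← Real.rpow_mul hmn0.le, one_div_mul_cancel hp0.ne', Real.rpow_one]
    push_cast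
    rfl
  obtain ⟨Q, hQ0, hQi, hQ, hQE⟩ := dom_signed hp1 hp2 hm
    (fun i j => hui.1 ⟨(i + 1, j + 1), by simp⟩) hκ hV m n hb hbp hη
    (fun D => (hsum b hb).sum_le_tsum (Finset.range D) fun d _ => scaleTerm_nonneg hκ0 b d)
  have hsub : {ω | ε < maxDS (fun i j => X i j ω - ∫ ω', X i j ω') m n / b} ⊆
      {ω | ε * b ≤ Q ω} := by
    intro ω hω
    rw [Set.mem_ofPred_eq, lt_div_iff₀ hb] at hω
    exact hω.le.trans (maxDS_le (hQ0 ω) fun u hu v hv => hQ u hu v hv ω)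
  have hmarkov := mul_meas_ge_le_integral_of_nonneg (Eventually.of_forall hQ0) hQi (ε * b)
  have hprob : (volume {ω | ε < maxDS (fun i j => X i j ω - ∫ ω', X i j ω') m n / b}).toReal
      ≤ volume.real {ω | ε * b ≤ Q ω} := measureReal_mono hsub
  have h1 : (ε * b) * volume.real {ω | ε * b ≤ Q ω} ≤ (ε * b) * δ := by
    refine hmarkov.trans (hQE.trans ?_)
    calc _ ≤ 2 * (b * (ε * δ / 4 + ε * δ / 4)) := by gcongr
      _ = _ := by ring
  exact hprob.trans (le_of_mul_le_mul_left h1 (by positivity))
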